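/- If the discrete Sobolev inner product is sequentially-ordered and μ belongs to the Nevai class M(0,1), then for every k ≥ 1 there exists a constant M_ρ > 0 such that ∫_{−1}^{1} S⁺_{n+k,2}(x) ρ(x) dμ(x) ≤ M_ρ for all n ∈ ℤ≥0; in other words, the total masses μ_{ρ,n}([−1,1]) of the measures dμ_{ρ,n} = S⁺_{n+k,2} ρ dμ are uniformly bounded in n. -/

import Mathlib

open MeasureTheory Polynomial Filter
open scoped Classical

noncomputable section

/-- The discrete Sobolev inner product with a single derivative order `d j` at each
mass point `c j`, with weight `η j`. -/
def sobInner (μ : Measure ℝ) {N : ℕ} (c : Fin N → ℝ) (d : Fin N → ℕ) (η : Fin N → ℝ)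
    (f g : Polynomial ℝ) : ℝ :=
  (∫ x in Set.Icc (-1:ℝ) 1, f.eval x * g.eval x ∂μ) +
    ∑ j, η j * ((derivative^[d j] f).eval (c j)) * ((derivative^[d j] g).eval (c j))

/-- The general discrete Sobolev inner product with weights `η j i` for the `i`-th
derivatives, `0 ≤ i ≤ d j`, at each mass point `c j`. -/
def sobInner2 (μ : Measure ℝ) {N : ℕ} (c : Fin N → ℝ) (d : Fin N → ℕ) (η : Fin N → ℕ → ℝ)
    (f g : Polynomial ℝ) : ℝ :=
  (∫ x in Set.Icc (-1:ℝ) 1, f.eval x * g.eval x ∂μ) +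
    ∑ j, ∑ i ∈ Finset.range (d j + 1),
      η j i * ((derivative^[i] f).eval (c j)) * ((derivative^[i] g).eval (c j))

/-- Sequential order for the data of a discrete Sobolev inner product:
`d` is nondecreasing and each `c k` lies outside the convex hull of
`(-1,1) ∪ {c 1, …, c (k-1)}`. -/
def SeqOrdered {N : ℕ} (c : Fin N → ℝ) (d : Fin N → ℕ) : Prop :=
  (∀ i j : Fin N, i ≤ j → d i ≤ d j) ∧
    ∀ k : Fin N, c k ∉ convexHull ℝ (Set.Ioo (-1:ℝ) 1 ∪ c '' {j : Fin N | j < k})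

/-- The polynomial ρ(x) = ∏_{c j < -1} (x - c j)^(d j + 1) · ∏_{c j > 1} (c j - x)^(d j + 1). -/
def rhoPoly {N : ℕ} (c : Fin N → ℝ) (d : Fin N → ℕ) : Polynomial ℝ :=
  (∏ j ∈ Finset.univ.filter (fun j => c j < -1), (X - C (c j)) ^ (d j + 1)) *
    ∏ j ∈ Finset.univ.filter (fun j => (1:ℝ) < c j), (C (c j) - X) ^ (d j + 1)

/-- ν = number of mass points greater than 1. -/
def nuCount {N : ℕ} (c : Fin N → ℝ) : ℕ :=
  (Finset.univ.filter (fun j : Fin N => (1:ℝ) < c j)).card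

/-- μ belongs to the Nevai class M(0,1): supp μ = [-1,1] and the monic orthogonal
polynomials of μ satisfy a three-term recurrence with aₙ → 1/2 and bₙ → 0. -/
def NevaiClass (μ : Measure ℝ) : Prop :=
  μ (Set.Icc (-1:ℝ) 1)ᶜ = 0 ∧
  (∀ x ∈ Set.Icc (-1:ℝ) 1, ∀ ε > 0, 0 < μ (Metric.ball x ε)) ∧
  ∃ (P : ℕ → Polynomial ℝ) (a b : ℕ → ℝ),
    (∀ n, (P n).Monic) ∧ (∀ n, (P n).natDegree = n) ∧
    (∀ n, ∀ m < n, (∫ x in Set.Icc (-1:ℝ) 1, x ^ m * (P n).eval x ∂μ) = 0) ∧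
    P 0 = 1 ∧ P 1 = X - C (b 0) ∧
    (∀ n, P (n + 2) = (X - C (b (n + 1))) * P (n + 1) - C ((a (n + 1)) ^ 2) * P n) ∧
    Tendsto a atTop (nhds (1 / 2)) ∧ Tendsto b atTop (nhds 0)

/-- The segment [-1,1] regarded as a subset of ℂ. -/
def segIcc : Set ℂ := Complex.ofReal '' Set.Icc (-1:ℝ) 1

/-- Markov-type function: z ↦ ∫ q(x) / (z - x) w(x) dμ(x). -/
def markovHat (μ : Measure ℝ) (w q : Polynomial ℝ) (z : ℂ) : ℂ :=
  ∫ x in Set.Icc (-1:ℝ) 1, ((q.eval x * w.eval x : ℝ) : ℂ) / (z - (x : ℂ)) ∂μ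

/-- Associated function: z ↦ ∫ (p(z) - p(x)) / (z - x) · q(x) w(x) dμ(x). -/
def assocFun (μ : Measure ℝ) (w q p : Polynomial ℝ) (z : ℂ) : ℂ :=
  ∫ x in Set.Icc (-1:ℝ) 1,
    ((aeval z p - ((p.eval x : ℝ) : ℂ)) / (z - (x : ℂ))) * ((q.eval x * w.eval x : ℝ) : ℂ) ∂μ

/-- A function changes sign at `t` if arbitrarily close to `t`, on the left and right,
it takes values of opposite signs. -/
def SignChangeAt (p : Polynomial ℝ) (t : ℝ) : Prop :=
  ∀ δ > 0, ∃ x ∈ Set.Ioo (t - δ) t, ∃ y ∈ Set.Ioo t (t + δ), p.eval x * p.eval y < 0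

/-- N₀(f; A): number of zeros of `f` in `A`, counted with multiplicity. -/
def N0 (f : Polynomial ℝ) (A : Set ℝ) : ℕ :=
  (f.roots.filter (fun x => x ∈ A)).card

lemma polyInt (μ : Measure ℝ) [IsFiniteMeasure μ] (p : Polynomial ℝ) :
    Integrable (fun x => p.eval x) (μ.restrict (Set.Icc (-1:ℝ) 1)) :=
  (p.continuous.continuousOn).integrableOn_compact isCompact_Icc

lemma polyInt2 (μ : Measure ℝ) [IsFiniteMeasure μ] (p q : Polynomial ℝ) :
    Integrable (fun x => p.eval x * q.eval x) (μ.restrict (Set.Icc (-1:ℝ) 1)) := by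
  simpa using polyInt μ (p * q)

def sobB (μ : Measure ℝ) [IsFiniteMeasure μ] {N : ℕ} (c : Fin N → ℝ) (d : Fin N → ℕ)
    (η : Fin N → ℝ) : Polynomial ℝ →ₗ[ℝ] Polynomial ℝ →ₗ[ℝ] ℝ :=
  LinearMap.mk₂ ℝ (sobInner μ c d η)
    (by
      intro f g h
      simp only [sobInner, eval_add, iterate_map_add, add_mul, mul_add]
      rw [integral_add (polyInt2 μ f h) (polyInt2 μ g h), Finset.sum_add_distrib]
      ring)
    (by
      intro a f h
      simp only [sobInner, eval_smul, iterate_derivative_smul, smul_eq_mul, mul_add, mul_assoc]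
      rw [integral_const_mul, Finset.mul_sum]
      congr 1
      exact Finset.sum_congr rfl (fun _ _ => by ring))
    (by
      intro h f g
      simp only [sobInner, eval_add, iterate_map_add, mul_add]
      rw [integral_add (polyInt2 μ h f) (polyInt2 μ h g), Finset.sum_add_distrib]
      ring)
    (by
      intro a h f
      simp only [sobInner, eval_smul, iterate_derivative_smul, smul_eq_mul, mul_add,
        mul_left_comm _ a]
      rw [integral_const_mul, Finset.mul_sum])

lemma B_orth (B : Polynomial ℝ →ₗ[ℝ] Polynomial ℝ →ₗ[ℝ] ℝ) (n : ℕ) (S q : Polynomial ℝ)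
    (h : ∀ m < n, B (X ^ m) S = 0) (hq : q.degree < n) : B q S = 0 := by
  have h1 : B q S = B.flip S q := rfl
  rw [h1, q.as_sum_range_C_mul_X_pow, map_sum]
  refine Finset.sum_eq_zero (fun i hi => ?_)
  rw [← smul_eq_C_mul, map_smul]
  by_cases hin : i < n
  · rw [LinearMap.flip_apply, h i hin, smul_zero]
  · rw [coeff_eq_zero_of_degree_lt (lt_of_lt_of_le hq (by exact_mod_cast not_lt.1 hin)), zero_smul]

lemma B_extremal (B : Polynomial ℝ →ₗ[ℝ] Polynomial ℝ →ₗ[ℝ] ℝ) (hs : ∀ p q, B p q = B q p)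
    (hp : ∀ p, 0 ≤ B p p) (n : ℕ) (S f : Polynomial ℝ)
    (h : ∀ m < n, B (X ^ m) S = 0) (hS : S.Monic) (hSn : S.natDegree = n)
    (hf : f.Monic) (hfn : f.natDegree = n) : B S S ≤ B f f := by
  have hd : (f - S).degree < n := by
    have h1 := degree_sub_lt_left (p := f) (q := S)
      (by rw [degree_eq_natDegree hf.ne_zero, degree_eq_natDegree hS.ne_zero, hSn, hfn])
      hf.ne_zero (by rw [hf.leadingCoeff, hS.leadingCoeff])
    rwa [degree_eq_natDegree hf.ne_zero, hfn] at h1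
  have h0 := B_orth B n S _ h hd
  have h1 : f = S + (f - S) := by ring
  have h2 := hp (f - S)
  rw [h1]
  simp only [map_add, LinearMap.add_apply] 
  rw [h0, hs S (f - S), h0]
  linarith

lemma sobB_apply (μ : Measure ℝ) [IsFiniteMeasure μ] {N : ℕ} (c : Fin N → ℝ) (d : Fin N → ℕ)
    (η : Fin N → ℝ) (f g) : sobB μ c d η f g = sobInner μ c d η f g := rfl

lemma sob_comm (μ : Measure ℝ) [IsFiniteMeasure μ] {N : ℕ} (c : Fin N → ℝ) (d : Fin N → ℕ)
    (η : Fin N → ℝ) (f g) : sobB μ c d η f g = sobB μ c d η g f := by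
  simp only [sobB_apply, sobInner]
  congr 1
  · simp only [mul_comm]
  · exact Finset.sum_congr rfl (fun _ _ => by ring)

lemma sob_ge (μ : Measure ℝ) [IsFiniteMeasure μ] {N : ℕ} (c : Fin N → ℝ) (d : Fin N → ℕ)
    (η : Fin N → ℝ) (hη : ∀ j, 0 < η j) (f) :
    ∫ x in Set.Icc (-1:ℝ) 1, (f.eval x) ^ 2 ∂μ ≤ sobB μ c d η f f := by
  simp only [sobB_apply, sobInner, pow_two]
  have : 0 ≤ ∑ j, η j * ((derivative^[d j] f).eval (c j)) * ((derivative^[d j] f).eval (c j)) :=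
    Finset.sum_nonneg (fun j _ => by
      rw [mul_assoc]; exact mul_nonneg (hη j).le (mul_self_nonneg _))
  linarith

lemma sob_nonneg (μ : Measure ℝ) [IsFiniteMeasure μ] {N : ℕ} (c : Fin N → ℝ) (d : Fin N → ℕ)
    (η : Fin N → ℝ) (hη : ∀ j, 0 < η j) (f) : 0 ≤ sobB μ c d η f f :=
  le_trans (integral_nonneg (fun _ => sq_nonneg _)) (sob_ge μ c d η hη f)

def nB (μ : Measure ℝ) [IsFiniteMeasure μ] : Polynomial ℝ →ₗ[ℝ] Polynomial ℝ →ₗ[ℝ] ℝ :=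
  sobB μ (N := 0) (fun _ => 0) (fun _ => 0) (fun _ => 1)

lemma nB_apply (μ : Measure ℝ) [IsFiniteMeasure μ] (f g : Polynomial ℝ) :
    nB μ f g = ∫ x in Set.Icc (-1:ℝ) 1, f.eval x * g.eval x ∂μ := by
  simp [nB, sobB_apply, sobInner]

lemma nB_comm (μ : Measure ℝ) [IsFiniteMeasure μ] (f g : Polynomial ℝ) :
    nB μ f g = nB μ g f := sob_comm _ _ _ _ _ _

lemma nB_nonneg (μ : Measure ℝ) [IsFiniteMeasure μ] (f : Polynomial ℝ) :
    0 ≤ nB μ f f := sob_nonneg _ _ _ _ (by simp) _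

lemma poly_bdd (p : Polynomial ℝ) : ∃ K : ℝ, 0 ≤ K ∧ ∀ x ∈ Set.Icc (-1:ℝ) 1, |p.eval x| ≤ K := by
  obtain ⟨K, hK⟩ := isCompact_Icc.exists_bound_of_continuousOn
    (p.continuous.continuousOn (s := Set.Icc (-1:ℝ) 1))
  exact ⟨K, le_trans (norm_nonneg _) (hK 0 (by simp)), hK⟩

lemma h_rec (μ : Measure ℝ) [IsFiniteMeasure μ] (P : ℕ → Polynomial ℝ) (a b : ℕ → ℝ)
    (hm : ∀ n, (P n).Monic) (hd : ∀ n, (P n).natDegree = n)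
    (ho : ∀ n, ∀ m < n, nB μ (X ^ m) (P n) = 0)
    (hr : ∀ n, P (n + 2) = (X - C (b (n + 1))) * P (n + 1) - C ((a (n + 1)) ^ 2) * P n) (n : ℕ) :
    nB μ (P (n+1)) (P (n+1)) = a (n+1) ^ 2 * nB μ (P n) (P n) := by
  have hdeg : ∀ n, (P n).degree = n := fun n => by
    rw [degree_eq_natDegree (hm n).ne_zero, hd]
  have h1 : nB μ (P n) (P (n+2)) = 0 :=
    B_orth _ (n+2) _ _ (ho _) (by rw [hdeg]; exact_mod_cast (by omega))
  have h2 : nB μ (P n) (P (n+1)) = 0 :=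
    B_orth _ (n+1) _ _ (ho _) (by rw [hdeg]; exact_mod_cast (by omega))
  have hmX : (X * P n).Monic := monic_X.mul (hm n)
  have hdX : (X * P n).degree = ((n+1 : ℕ) : WithBot ℕ) := by
    rw [degree_mul, degree_X, hdeg]; push_cast; ring
  have h3 : nB μ (X * P n - P (n+1)) (P (n+1)) = 0 := by
    refine B_orth _ (n+1) _ _ (ho _) ?_
    have := degree_sub_lt_left (p := X * P n) (q := P (n+1)) (by rw [hdX, hdeg]) hmX.ne_zero
      (by rw [hmX.leadingCoeff, (hm _).leadingCoeff])
    rwa [hdX] at this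
  have h4 : nB μ (P n) (X * P (n+1)) = nB μ (X * P n) (P (n+1)) := by
    simp only [nB_apply, eval_mul, eval_X]
    congr 1; ext x; ring
  have h5 : P (n+2) = X * P (n+1) - b (n+1) • P (n+1) - (a (n+1))^2 • P n := by
    rw [hr, smul_eq_C_mul, smul_eq_C_mul]; ring
  rw [h5] at h1
  simp only [map_sub, map_smul, smul_eq_mul, LinearMap.sub_apply] at h1 h3
  rw [h2, h4] at h1
  linarith

lemma sigma_zero {N : ℕ} (c : Fin N → ℝ) (d : Fin N → ℕ) (q : Polynomial ℝ) (j : Fin N) :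
    (derivative^[d j] ((∏ i, (X - C (c i)) ^ (d i + 1)) * q)).eval (c j) = 0 := by
  have h1 : (X - C (c j)) ^ (d j + 1) ∣ (∏ i, (X - C (c i)) ^ (d i + 1)) * q :=
    Dvd.dvd.mul_right (Finset.dvd_prod_of_mem (fun i => (X - C (c i)) ^ (d i + 1))
      (Finset.mem_univ j)) _
  have h2 := pow_sub_dvd_iterate_derivative_of_pow_dvd (d j) h1
  rw [Nat.add_sub_cancel_left, pow_one] at h2
  exact dvd_iff_isRoot.1 h2

lemma mset_bound (R x : ℝ) (s : Multiset ℝ) (hR : ∀ z ∈ s, |z| ≤ R) (hx : |x| ≤ 1) (hR0 : 0 ≤ R) :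
    |((s.map (fun z => X - C z)).prod).eval x| ≤ (R + 1) ^ (Multiset.card s) := by
  induction s using Multiset.induction_on with
  | empty => simp
  | cons z s ih =>
    simp only [Multiset.map_cons, Multiset.prod_cons, eval_mul, abs_mul, Multiset.card_cons,
      pow_succ']
    refine mul_le_mul ?_ (ih fun y hy => hR y (Multiset.mem_cons_of_mem hy)) (abs_nonneg _)
      (by linarith)
    simp only [eval_sub, eval_X, eval_C]
    have := abs_sub x z
    have := hR z (Multiset.mem_cons_self z s)
    linarith

lemma pow_chain (h : ℕ → ℝ) (n1 : ℕ) (hh : ∀ m, n1 ≤ m → h m ≤ 16 * h (m+1)) (m : ℕ) (hm : n1 ≤ m)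
    (j : ℕ) : h m ≤ 16 ^ j * h (m + j) := by
  induction j with
  | zero => simp
  | succ j ih =>
    have := hh (m + j) (by omega)
    calc h m ≤ 16 ^ j * h (m + j) := ih
      _ ≤ 16 ^ j * (16 * h (m + j + 1)) := by gcongr
      _ = _ := by rw [pow_succ]; ring_nf

lemma root_bound
    (μ : Measure ℝ) [IsFiniteMeasure μ]
    (hμinf : ∀ p : Polynomial ℝ, p ≠ 0 → 0 < ∫ x in Set.Icc (-1:ℝ) 1, (p.eval x) ^ 2 ∂μ)
    {N : ℕ} (c : Fin N → ℝ) (d : Fin N → ℕ)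
    (η : Fin N → ℝ) (hη : ∀ j, 0 < η j)
    (S : ℕ → Polynomial ℝ)
    (hSmonic : ∀ n, (S n).Monic) (hSdeg : ∀ n, (S n).natDegree = n)
    (hSorth : ∀ n, ∀ m < n, sobInner μ c d η (X ^ m) (S n) = 0)
    (hNevai : NevaiClass μ) :
    ∃ R : ℝ, 0 ≤ R ∧ ∃ n2 : ℕ, ∀ n, n2 ≤ n → ∀ z, (S n).eval z = 0 → |z| ≤ R := by
  obtain ⟨-, -, P, a, b, hm, hd, ho', -, -, hr, ha, -⟩ := hNevai
  have ho : ∀ n, ∀ m < n, nB μ (X ^ m) (P n) = 0 := by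
    intro n m h
    rw [nB_apply]; simpa using ho' n m h
  set h : ℕ → ℝ := fun n => nB μ (P n) (P n) with hh
  have hpos : ∀ n, 0 < h n := fun n => by
    simpa only [hh, nB_apply, pow_two] using hμinf (P n) (hm n).ne_zero
  obtain ⟨n1, hn1⟩ : ∃ n1, ∀ m, n1 ≤ m → 1/4 < a m :=
    eventually_atTop.1 (ha.eventually (lt_mem_nhds (by norm_num)))
  have hstep : ∀ m, n1 ≤ m → h m ≤ 16 * h (m+1) := by
    intro m hmn
    have e := h_rec μ P a b hm hd ho hr m
    have e2 := hn1 (m+1) (by omega)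
    have e3 : 1/16 ≤ a (m+1) ^ 2 := by nlinarith
    have := hpos m
    simp only [hh] at this ⊢
    rw [e]; nlinarith
  set s : Polynomial ℝ := ∏ i, (X - C (c i)) ^ (d i + 1) with hs
  have hsm : s.Monic := monic_prod_of_monic _ _ (fun i _ => (monic_X_sub_C _).pow _)
  set D := s.natDegree with hD
  obtain ⟨K, hK0, hK⟩ := poly_bdd (s * X)
  refine ⟨2 + K^2 * 16 ^ D, by positivity, n1 + D + 1, ?_⟩
  intro n hn z hz
  obtain ⟨m, rfl⟩ : ∃ m, n = m + D + 1 := ⟨n - D - 1, by omega⟩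
  have hmn : n1 ≤ m := by omega
  obtain ⟨Q, hQ⟩ := dvd_iff_isRoot.2 hz
  have hQm : Q.Monic := (monic_X_sub_C z).of_mul_monic_left (hQ ▸ hSmonic _)
  have hQd : Q.natDegree = m + D := by
    have := hSdeg (m + D + 1)
    rw [hQ, (monic_X_sub_C z).natDegree_mul hQm, natDegree_X_sub_C] at this
    omega
  have i1 : h (m+D) ≤ nB μ Q Q :=
    B_extremal (nB μ) (nB_comm μ) (nB_nonneg μ) _ _ _ (ho _) (hm _) (hd _) hQm hQd
  have i2 : sobB μ c d η (S (m+D+1)) (S (m+D+1)) ≤ sobB μ c d η (s * (X * P m)) (s * (X * P m)) := by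
    refine B_extremal _ (sob_comm μ c d η) (sob_nonneg μ c d η hη) (m+D+1) _ _ (hSorth _)
      (hSmonic _) (hSdeg _) (hsm.mul (monic_X.mul (hm m))) ?_
    rw [hsm.natDegree_mul (monic_X.mul (hm m)), monic_X.natDegree_mul (hm m), natDegree_X, hd]
    omega
  have i3 : sobB μ c d η (s * (X * P m)) (s * (X * P m)) ≤ K^2 * h m := by
    rw [sobB_apply, sobInner, Finset.sum_eq_zero, add_zero]
    · simp only [hh, nB_apply]
      rw [← integral_const_mul]
      refine setIntegral_mono_on (polyInt2 μ _ _) ((polyInt2 μ _ _).const_mul _) measurableSet_Icc ?_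
      intro x hx
      have h1 := hK x hx
      have h2 : ((s * X).eval x)^2 ≤ K^2 := sq_le_sq' (abs_le.1 h1).1 (abs_le.1 h1).2
      simp only [eval_mul, eval_X] at h2 ⊢
      nlinarith [mul_le_mul_of_nonneg_right h2 (mul_self_nonneg ((P m).eval x))]
    · intro j _
      rw [hs, sigma_zero, mul_zero]
  have i4 := sob_ge μ c d η hη (S (m+D+1))
  have i5 := pow_chain h n1 hstep m hmn D
  by_contra hcon
  push Not at hcon
  have hz1 : 1 ≤ |z| := by
    have : 0 ≤ K^2 * 16^D := by positivity
    linarith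
  have i6 : (|z|-1)^2 * nB μ Q Q ≤ ∫ x in Set.Icc (-1:ℝ) 1, ((S (m+D+1)).eval x) ^ 2 ∂μ := by
    rw [nB_apply, ← integral_const_mul]
    refine setIntegral_mono_on ((polyInt2 μ _ _).const_mul _) ?_ measurableSet_Icc ?_
    · simp only [pow_two]; exact polyInt2 μ _ _
    intro x hx
    rw [hQ]
    simp only [eval_mul, eval_sub, eval_X, eval_C]
    have hx1 : |x| ≤ 1 := abs_le.2 hx
    have h1 : |z| - 1 ≤ |x - z| := by
      have := abs_sub_abs_le_abs_sub z x
      rw [abs_sub_comm] at this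
      linarith
    have h2 : (|z|-1)^2 ≤ (x-z)^2 := by
      rw [← sq_abs (x - z)]
      exact pow_le_pow_left₀ (by linarith) h1 2
    nlinarith [mul_le_mul_of_nonneg_right h2 (mul_self_nonneg (Q.eval x))]
  have i7 : (|z|-1)^2 * h (m+D) ≤ (K^2 * 16^D) * h (m+D) := by
    calc (|z|-1)^2 * h (m+D) ≤ (|z|-1)^2 * nB μ Q Q := by gcongr
      _ ≤ K^2 * h m := by linarith
      _ ≤ K^2 * (16^D * h (m+D)) := by gcongr
      _ = _ := by ring
  have i8 := le_of_mul_le_mul_right i7 (hpos _)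
  have : 0 ≤ K^2 * 16^D := by positivity
  nlinarith

/-- The total masses of the measures `dμ_{ρ,n} = S⁺_{n+k,2} ρ dμ`
are uniformly bounded in `n`. -/
theorem statement18
    (μ : Measure ℝ) [IsFiniteMeasure μ]
    (hμsupp : μ (Set.Icc (-1:ℝ) 1)ᶜ = 0)
    (hμinf : ∀ p : Polynomial ℝ, p ≠ 0 → 0 < ∫ x in Set.Icc (-1:ℝ) 1, (p.eval x) ^ 2 ∂μ)
    {N : ℕ} (c : Fin N → ℝ) (d : Fin N → ℕ)
    (hc : ∀ j, c j ∉ Set.Icc (-1:ℝ) 1)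
    (η : Fin N → ℝ) (hη : ∀ j, 0 < η j)
    (hseq : SeqOrdered c d)
    (S : ℕ → Polynomial ℝ)
    (hSmonic : ∀ n, (S n).Monic) (hSdeg : ∀ n, (S n).natDegree = n)
    (hSorth : ∀ n, ∀ m < n, sobInner μ c d η (X ^ m) (S n) = 0)
    (S1 S2 : ℕ → Polynomial ℝ) (n₀ : ℕ)
    (hfact : ∀ n, n₀ ≤ n → S n = S1 n * S2 n)
    (hS1 : ∀ n, n₀ ≤ n → (S1 n).Monic ∧ (S1 n).natDegree = n - N ∧
      (S1 n).roots.Nodup ∧ Multiset.card (S1 n).roots = n - N ∧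
      ∀ x ∈ (S1 n).roots, x ∈ Set.Ioo (-1:ℝ) 1)
    (hS2 : ∀ n, n₀ ≤ n → (S2 n).Monic ∧ (S2 n).natDegree = N ∧
      Multiset.card (S2 n).roots = N ∧ ∀ x ∈ (S2 n).roots, x ∉ Set.Icc (-1:ℝ) 1)
    (hNevai : NevaiClass μ)
    (k : ℕ) (hk : 1 ≤ k) :
    ∃ M : ℝ, 0 < M ∧ ∀ n : ℕ,
      (∫ x in Set.Icc (-1:ℝ) 1,
        ((-1:ℝ) ^ nuCount c * (S2 (n + k)).eval x) * (rhoPoly c d).eval x ∂μ) ≤ M := by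
  obtain ⟨R, hR0, n2, hR⟩ := root_bound μ hμinf c d η hη S hSmonic hSdeg hSorth hNevai
  obtain ⟨K, hK0, hK⟩ := poly_bdd (rhoPoly c d)
  set u : ℕ → ℝ := fun n => ∫ x in Set.Icc (-1:ℝ) 1,
        ((-1:ℝ) ^ nuCount c * (S2 (n + k)).eval x) * (rhoPoly c d).eval x ∂μ with hu
  set T : ℝ := ((R + 1) ^ N * K) * μ.real (Set.Icc (-1:ℝ) 1) with hT
  have hT0 : 0 ≤ T := by positivity
  have hbig : ∀ n, n₀ + n2 ≤ n → u n ≤ T := by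
    intro n hn
    have h1 : n₀ ≤ n + k := by omega
    obtain ⟨hm, hd, hcard, -⟩ := hS2 (n + k) h1
    refine (Real.le_norm_self _).trans ?_
    refine norm_setIntegral_le_of_norm_le_const (measure_lt_top _ _) ?_
    intro x hx
    have hx1 : |x| ≤ 1 := abs_le.2 hx
    have h2 : |(S2 (n+k)).eval x| ≤ (R + 1) ^ N := by
      have h3 := mset_bound R x (S2 (n+k)).roots (by
        intro z hz
        refine hR (n + k) (by omega) z ?_
        rw [hfact _ h1, eval_mul, (mem_roots'.1 hz).2, mul_zero]) hx1 hR0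
      rw [prod_multiset_X_sub_C_of_monic_of_roots_card_eq hm (by rw [hcard, hd]), hcard] at h3
      exact h3
    rw [Real.norm_eq_abs, abs_mul, abs_mul, abs_pow, abs_neg, abs_one, one_pow, one_mul]
    exact mul_le_mul h2 (hK x hx) (abs_nonneg _) (by positivity)
  refine ⟨∑ i ∈ Finset.range (n₀ + n2), |u i| + T + 1, ?_, ?_⟩
  · have : 0 ≤ ∑ i ∈ Finset.range (n₀ + n2), |u i| := Finset.sum_nonneg (fun _ _ => abs_nonneg _)
    linarith
  · intro n
    change u n ≤ _
    have h0 : 0 ≤ ∑ i ∈ Finset.range (n₀ + n2), |u i| := Finset.sum_nonneg (fun _ _ => abs_nonneg _)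
    by_cases hn : n₀ + n2 ≤ n
    · have := hbig n hn
      linarith
    · have h1 : |u n| ≤ ∑ i ∈ Finset.range (n₀ + n2), |u i| :=
        Finset.single_le_sum (f := fun i => |u i|) (fun _ _ => abs_nonneg _)
          (Finset.mem_range.2 (not_le.1 hn))
      have := le_abs_self (u n)
      linarith

end
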